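/- There exists a universal constant K > 0 such that for all α, β with αβ > 0 and |α| + |β| < 1, and all k, ℓ ∈ ℤ, the stationary solution covariances R_{k,ℓ} = Cov(X_{k,ℓ}, X_{0,0}) of the spatial AR equation X_{k,ℓ} = α X_{k−1,ℓ} + β X_{k,ℓ−1} + ε_{k,ℓ} satisfy |R_{k−1,ℓ+1} − R_{k,ℓ}| ≤ K/(αβ)^{3/2}. -/

import Mathlib

/-!
The moving-average coefficients `a` satisfy the recurrence of the spatial AR equation driven by a
point mass, hence so does their autocorrelation `R`, with driving term `a (-·)`, which vanishes off
the closed negative quadrant. On the antidiagonal, `f k = R_{k,-k}` is even, nonnegative (terms of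
equal total degree have equal signs because `αβ > 0`), bounded, and
`(1 - (α + β)²) f = αβ Δ²f + δ₀`. So `f` is convex on `ℕ`, and a bounded convex sequence is
nonincreasing with its steepest descent at the origin, where the equation gives
`f 0 - f 1 ≤ 1 / (2αβ)`. Differences of `R` satisfy the homogeneous recurrence above the
antidiagonal, and since `|α| + |β| ≤ 1` the bound propagates there by a maximum principle; below the
antidiagonal use `R_{-k,-ℓ} = R_{k,ℓ}`.
-/

/-- The covariance `R_{k,ℓ} = Cov(X_{k,ℓ}, X_{0,0})` of the stationary solution of the
spatial AR equation `X_{k,ℓ} = α X_{k−1,ℓ} + β X_{k,ℓ−1} + ε_{k,ℓ}` with i.i.d. noise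
of mean `0` and variance `1`, computed from the moving-average representation
`X_{k,ℓ} = ∑_{i≤k, j≤ℓ} C(k+ℓ−i−j, k−i) α^{k−i} β^{ℓ−j} ε_{i,j}`. -/
noncomputable def Rcov (α β : ℝ) (k ℓ : ℤ) : ℝ :=
  ∑' p : ℤ × ℤ,
    if p.1 ≤ min k 0 ∧ p.2 ≤ min ℓ 0 then
      ((k + ℓ - p.1 - p.2).toNat.choose (k - p.1).toNat : ℝ) *
        α ^ (k - p.1).toNat * β ^ (ℓ - p.2).toNat *
        ((-p.1 - p.2).toNat.choose (-p.1).toNat : ℝ) *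
        α ^ (-p.1).toNat * β ^ (-p.2).toNat
    else 0

open Finset

theorem summable_iff_summable_sum_antidiagonal_of_nonneg {A : Type*} [AddMonoid A]
    [HasAntidiagonal A] {f : A × A → ℝ} (hf : 0 ≤ f) :
    Summable f ↔ Summable fun n ↦ ∑ p ∈ antidiagonal n, f p := by
  rw [← HasAntidiagonal.sigmaAntidiagonalEquivProd.summable_iff,
    summable_sigma_of_nonneg (f := f ∘ HasAntidiagonal.sigmaAntidiagonalEquivProd) fun _ ↦ hf _]
  simp [Summable.of_finite, tsum_fintype, ← sum_coe_sort (antidiagonal _)]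

theorem summable_choose_mul_pow_mul_pow {x y : ℝ} (hx : 0 ≤ x) (hy : 0 ≤ y) (h : x + y < 1) :
    Summable fun p : ℕ × ℕ ↦ ((p.1 + p.2).choose p.1 : ℝ) * x ^ p.1 * y ^ p.2 := by
  have binomial (n : ℕ) :
      ∑ p ∈ antidiagonal n, ((p.1 + p.2).choose p.1 : ℝ) * x ^ p.1 * y ^ p.2 = (x + y) ^ n := by
    rw [(Commute.all x y).add_pow']
    refine sum_congr rfl fun p hp ↦ ?_
    rw [mem_antidiagonal.mp hp, nsmul_eq_mul, mul_assoc]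
  rw [summable_iff_summable_sum_antidiagonal_of_nonneg fun p ↦ by positivity]
  simpa only [binomial] using summable_geometric_of_lt_one (add_nonneg hx hy) h

section UnitBall

variable {R : Type*} [CommRing R] [LinearOrder R] [IsStrictOrderedRing R] {a b : R}

theorem add_sq_le_one_of_abs_add_abs_le_one (h : |a| + |b| ≤ 1) : (a + b) ^ 2 ≤ 1 :=
  (sq_le_one_iff_abs_le_one _).mpr ((abs_add_le a b).trans h)

theorem mul_le_one_of_abs_add_abs_le_one (h : |a| + |b| ≤ 1) : a * b ≤ 1 :=
  calc a * b ≤ |a| * |b| := abs_mul a b ▸ le_abs_self _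
    _ ≤ 1 := mul_le_one₀ ((le_add_of_nonneg_right (abs_nonneg b)).trans h) (abs_nonneg b)
      ((le_add_of_nonneg_left (abs_nonneg a)).trans h)

end UnitBall

section BoundedConvex

variable {M : Type*} [AddCommGroup M] [LinearOrder M] [IsOrderedAddMonoid M] {g : ℕ → M}

theorem add_nsmul_sub_le_of_monotone_sub (hg : Monotone fun n ↦ g (n + 1) - g n) (n m : ℕ) :
    g n + m • (g (n + 1) - g n) ≤ g (n + m) := by
  induction m with
  | zero => simp
  | succ m ih =>
    calc g n + (m + 1) • (g (n + 1) - g n)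
        = g n + m • (g (n + 1) - g n) + (g (n + 1) - g n) := by rw [succ_nsmul, add_assoc]
      _ ≤ g (n + m) + (g (n + m + 1) - g (n + m)) := add_le_add ih (hg (Nat.le_add_right n m))
      _ = g (n + (m + 1)) := by rw [add_sub_cancel, add_assoc]

theorem antitone_of_monotone_sub_of_bddAbove [Archimedean M]
    (hg : Monotone fun n ↦ g (n + 1) - g n) (hB : BddAbove (Set.range g)) : Antitone g := by
  obtain ⟨B, hB⟩ := hB
  refine antitone_nat_of_succ_le fun n ↦ ?_
  by_contra! hlt
  obtain ⟨m, hm⟩ := exists_lt_nsmul (sub_pos.mpr hlt) (B - g n)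
  have hle : g n + m • (g (n + 1) - g n) ≤ B :=
    (add_nsmul_sub_le_of_monotone_sub hg n m).trans (hB ⟨n + m, rfl⟩)
  exact (sub_lt_iff_lt_add'.mp hm).not_ge hle

theorem abs_sub_le_of_monotone_sub_of_bddAbove [Archimedean M]
    (hg : Monotone fun n ↦ g (n + 1) - g n) (hB : BddAbove (Set.range g)) (n : ℕ) :
    |g (n + 1) - g n| ≤ g 0 - g 1 := by
  have hanti : g (n + 1) ≤ g n := antitone_of_monotone_sub_of_bddAbove hg hB n.le_succ
  rw [abs_of_nonpos (sub_nonpos.mpr hanti), ← neg_sub (g 1)]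
  exact neg_le_neg (hg n.zero_le)

end BoundedConvex

theorem norm_le_of_recurrence_of_antidiagonal {𝕜 E : Type*} [NormedField 𝕜]
    [SeminormedAddCommGroup E] [NormedSpace 𝕜 E] {α β : 𝕜} {u : ℤ → ℤ → E} {C : ℝ}
    (h : ‖α‖ + ‖β‖ ≤ 1)
    (hrec : ∀ k ℓ, 0 < k + ℓ → u k ℓ = α • u (k - 1) ℓ + β • u k (ℓ - 1))
    (hC : ∀ k, ‖u k (-k)‖ ≤ C) {k ℓ : ℤ} (hkl : 0 ≤ k + ℓ) : ‖u k ℓ‖ ≤ C := by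
  obtain ⟨m, hm⟩ := Int.eq_ofNat_of_zero_le hkl
  induction m generalizing k ℓ with
  | zero =>
    obtain rfl : ℓ = -k := by omega
    exact hC k
  | succ m ih =>
    have hC₀ : 0 ≤ C := (norm_nonneg _).trans (hC 0)
    calc ‖u k ℓ‖ = ‖α • u (k - 1) ℓ + β • u k (ℓ - 1)‖ := by rw [hrec k ℓ (by omega)]
      _ ≤ ‖α‖ * ‖u (k - 1) ℓ‖ + ‖β‖ * ‖u k (ℓ - 1)‖ := by
        simpa only [norm_smul] using norm_add_le (α • u (k - 1) ℓ) (β • u k (ℓ - 1))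
      _ ≤ ‖α‖ * C + ‖β‖ * C := by
        gcongr <;> exact ih (by omega) (by omega)
      _ = (‖α‖ + ‖β‖) * C := by ring
      _ ≤ C := mul_le_of_le_one_left hC₀ h

section Autocorrelation

variable {G R : Type*} [AddCommGroup G] [NormedCommRing R]

/-- The autocorrelation of `a`, that is, the covariance at lag `q` of the moving average with
coefficients `a` of unit-variance white noise on `G`. No conjugate is taken: the coefficients are
thought of as real. -/
noncomputable def autocorr (a : G → R) (q : G) : R := ∑' p, a (q + p) * a p

variable {a : G → R}

theorem autocorr_neg (a : G → R) (q : G) : autocorr a (-q) = autocorr a q := by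
  rw [autocorr, ← (Equiv.addLeft q).tsum_eq]
  simp [autocorr, mul_comm]

theorem norm_mul_translate_le (ha : Summable fun p ↦ ‖a p‖) (q p : G) :
    ‖a (q + p) * a p‖ ≤ (∑' g, ‖a g‖) * ‖a p‖ :=
  (norm_mul_le _ _).trans <| by
    gcongr
    exact ha.le_tsum (q + p) fun _ _ ↦ norm_nonneg _

theorem norm_autocorr_le (ha : Summable fun p ↦ ‖a p‖) (q : G) :
    ‖autocorr a q‖ ≤ (∑' p, ‖a p‖) ^ 2 := by
  rw [sq]
  exact tsum_of_norm_bounded (ha.hasSum.mul_left _) (norm_mul_translate_le ha q)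

variable [CompleteSpace R]

theorem hasSum_autocorr (ha : Summable fun p ↦ ‖a p‖) (q : G) :
    HasSum (fun p ↦ a (q + p) * a p) (autocorr a q) :=
  (Summable.of_norm_bounded (ha.mul_left _) (norm_mul_translate_le ha q)).hasSum

/-- The Yule–Walker equations. -/
theorem autocorr_recurrence [DecidableEq G] {ι : Type*} [Fintype ι] {c : ι → R} {d : ι → G}
    (ha : Summable fun p ↦ ‖a p‖)
    (hrec : ∀ p, a p = ∑ i, c i * a (p - d i) + (Pi.single 0 1 : G → R) p) (q : G) :
    autocorr a q = ∑ i, c i * autocorr a (q - d i) + a (-q) := by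
  have hlag : HasSum (fun p ↦ ∑ i, c i * (a (q - d i + p) * a p))
      (∑ i, c i * autocorr a (q - d i)) :=
    hasSum_sum fun i _ ↦ (hasSum_autocorr ha (q - d i)).mul_left (c i)
  have hnoise : HasSum (fun p ↦ (Pi.single 0 1 : G → R) (q + p) * a p) (a (-q)) := by
    convert hasSum_single (-q) fun p hp ↦ ?_ using 1
    · simp
    · rw [Pi.single_eq_of_ne fun h ↦ hp (eq_neg_of_add_eq_zero_right h), zero_mul]
  refine (hasSum_autocorr ha q).unique ?_
  convert hlag.add hnoise using 2 with p
  rw [hrec (q + p), add_mul, sum_mul]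
  simp only [mul_assoc, add_sub_right_comm]

end Autocorrelation

section MovingAverage

/-- The coefficient `C(i+j, i) αⁱ βʲ` of `ε_{k-i,ℓ-j}` in the moving-average representation of
`X_{k,ℓ}`, as a function of `(i, j) ∈ ℤ²`, extended by zero off the quadrant `i, j ≥ 0` so that
its recurrence holds on the whole group. -/
def maCoeff {R : Type*} [Semiring R] (α β : R) (p : ℤ × ℤ) : R :=
  if 0 ≤ p.1 ∧ 0 ≤ p.2 then
    ((p.1 + p.2).toNat.choose p.1.toNat : R) * α ^ p.1.toNat * β ^ p.2.toNat
  else 0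

theorem maCoeff_natCast {R : Type*} [Semiring R] (α β : R) (i j : ℕ) :
    maCoeff α β (i, j) = ((i + j).choose i : R) * α ^ i * β ^ j := by
  simp [maCoeff, show ((i : ℤ) + j).toNat = i + j by omega]

theorem maCoeff_of_neg {R : Type*} [Semiring R] (α β : R) {p : ℤ × ℤ} (h : p.1 < 0 ∨ p.2 < 0) :
    maCoeff α β p = 0 :=
  if_neg (by omega)

theorem maCoeff_recurrence {R : Type*} [CommSemiring R] (α β : R) (p : ℤ × ℤ) :
    maCoeff α β p = α * maCoeff α β (p - (1, 0)) + β * maCoeff α β (p - (0, 1)) +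
      (Pi.single 0 1 : ℤ × ℤ → R) p := by
  rcases eq_or_ne p 0 with rfl | hp
  · simp [maCoeff]
  rw [Pi.single_eq_of_ne hp, add_zero]
  obtain ⟨i, j⟩ := p
  rw [Prod.mk_sub_mk, Prod.mk_sub_mk, sub_zero, sub_zero]
  by_cases h : i < 0 ∨ j < 0
  · rw [maCoeff_of_neg α β (p := (i, j)) h, maCoeff_of_neg α β (p := (i - 1, j)) (by grind),
      maCoeff_of_neg α β (p := (i, j - 1)) (by grind), mul_zero, mul_zero, add_zero]
  push Not at h
  lift i to ℕ using h.1
  lift j to ℕ using h.2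
  have hpred (n : ℕ) : ((n + 1 : ℕ) : ℤ) - 1 = n := by simp
  rcases i with _ | i <;> rcases j with _ | j
  · exact absurd rfl hp
  · rw [maCoeff_of_neg α β (p := (_ - 1, _)) (by simp), hpred, maCoeff_natCast, maCoeff_natCast]
    simp [pow_succ']
  · rw [maCoeff_of_neg α β (p := (_, _ - 1)) (by simp), hpred, maCoeff_natCast, maCoeff_natCast]
    simp [pow_succ']
  · have pascal : (i + 1 + (j + 1)).choose (i + 1) =
        (i + (j + 1)).choose i + (i + 1 + j).choose (i + 1) := by
      rw [← add_assoc, Nat.choose_succ_succ, add_right_comm, ← add_assoc]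
    rw [hpred, hpred, maCoeff_natCast, maCoeff_natCast, maCoeff_natCast, pascal]
    push_cast
    ring

theorem maCoeff_nonneg {R : Type*} [Semiring R] [PartialOrder R] [IsOrderedRing R] {α β : R}
    (hα : 0 ≤ α) (hβ : 0 ≤ β) (p : ℤ × ℤ) : 0 ≤ maCoeff α β p := by
  unfold maCoeff
  split_ifs <;> positivity

theorem abs_maCoeff {R : Type*} [CommRing R] [LinearOrder R] [IsStrictOrderedRing R] (α β : R)
    (p : ℤ × ℤ) : |maCoeff α β p| = maCoeff |α| |β| p := by
  unfold maCoeff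
  split_ifs <;> simp [abs_mul, abs_pow]

theorem maCoeff_neg_neg {K : Type*} [Field K] (α β : K) (p : ℤ × ℤ) :
    maCoeff (-α) (-β) p = (-1) ^ (p.1 + p.2) * maCoeff α β p := by
  obtain ⟨i, j⟩ := p
  by_cases h : i < 0 ∨ j < 0
  · simp [maCoeff_of_neg _ _ (p := (i, j)) h]
  push Not at h
  lift i to ℕ using h.1
  lift j to ℕ using h.2
  rw [maCoeff_natCast, maCoeff_natCast, neg_pow α, neg_pow β, ← Nat.cast_add, zpow_natCast, pow_add]
  ring

variable {α β : ℝ}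

theorem summable_norm_maCoeff (h : |α| + |β| < 1) : Summable fun p ↦ ‖maCoeff α β p‖ := by
  have hinj : Function.Injective (Prod.map Nat.cast Nat.cast : ℕ × ℕ → ℤ × ℤ) :=
    Nat.cast_injective.prodMap Nat.cast_injective
  simp only [Real.norm_eq_abs, abs_maCoeff]
  refine (hinj.summable_iff fun p hp ↦ maCoeff_of_neg _ _ ?_).mp ?_
  · by_contra! hp₀
    exact hp ⟨(p.1.toNat, p.2.toNat), by simp [hp₀.1, hp₀.2]⟩
  · simpa only [Function.comp_def, Prod.map, maCoeff_natCast] using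
      summable_choose_mul_pow_mul_pow (abs_nonneg α) (abs_nonneg β) h

end MovingAverage

section Covariance

variable {α β : ℝ}

theorem Rcov_eq_autocorr (α β : ℝ) (k ℓ : ℤ) :
    Rcov α β k ℓ = autocorr (maCoeff α β) (k, ℓ) := by
  rw [Rcov, autocorr, ← (Equiv.neg (ℤ × ℤ)).tsum_eq (fun p ↦ maCoeff α β ((k, ℓ) + p) * _)]
  refine tsum_congr fun p ↦ ?_
  obtain ⟨i, j⟩ := p
  simp only [Equiv.neg_apply, Prod.neg_mk, Prod.mk_add_mk, ← sub_eq_add_neg, le_min_iff]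
  split_ifs with h
  · rw [maCoeff, maCoeff, if_pos (by grind), if_pos (by grind),
      show k + ℓ - i - j = k - i + (ℓ - j) by ring, sub_eq_add_neg (-i)]
    ring
  · by_cases hneg : -i < 0 ∨ -j < 0
    · rw [maCoeff_of_neg α β (p := (-i, -j)) hneg, mul_zero]
    · rw [maCoeff_of_neg α β (p := (k - i, ℓ - j)) (by grind), zero_mul]

theorem Rcov_neg (α β : ℝ) (k ℓ : ℤ) : Rcov α β (-k) (-ℓ) = Rcov α β k ℓ := by
  simpa only [Rcov_eq_autocorr] using! autocorr_neg (maCoeff α β) (k, ℓ)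

theorem abs_Rcov_le (h : |α| + |β| < 1) (k ℓ : ℤ) :
    |Rcov α β k ℓ| ≤ (∑' p, ‖maCoeff α β p‖) ^ 2 := by
  rw [Rcov_eq_autocorr]
  exact norm_autocorr_le (summable_norm_maCoeff h) (k, ℓ)

theorem Rcov_recurrence (h : |α| + |β| < 1) (k ℓ : ℤ) :
    Rcov α β k ℓ =
      α * Rcov α β (k - 1) ℓ + β * Rcov α β k (ℓ - 1) + maCoeff α β (-k, -ℓ) := by
  have hrec (p : ℤ × ℤ) : maCoeff α β p =
      ∑ i, ![α, β] i * maCoeff α β (p - ![(1, 0), (0, 1)] i) + (Pi.single 0 1 : ℤ × ℤ → ℝ) p := by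
    simpa [Fin.sum_univ_two] using maCoeff_recurrence α β p
  simpa [Fin.sum_univ_two, Rcov_eq_autocorr] using
    autocorr_recurrence (summable_norm_maCoeff h) hrec (k, ℓ)

theorem Rcov_recurrence_of_pos (h : |α| + |β| < 1) {k ℓ : ℤ} (hkl : 0 < k + ℓ) :
    Rcov α β k ℓ = α * Rcov α β (k - 1) ℓ + β * Rcov α β k (ℓ - 1) := by
  rw [Rcov_recurrence h, maCoeff_of_neg α β (by dsimp only; omega), add_zero]

end Covariance

section Antidiagonal

variable {α β : ℝ}

/-- The covariance `R_{k,-k}` along the antidiagonal. There the recurrence of `R` in two variables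
closes up to a second-order difference equation in `k`. -/
noncomputable def antidiagCov (α β : ℝ) (k : ℤ) : ℝ := Rcov α β k (-k)

theorem antidiagCov_neg (α β : ℝ) (k : ℤ) : antidiagCov α β (-k) = antidiagCov α β k :=
  Rcov_neg α β k (-k)

theorem antidiagCov_neg_coeffs (α β : ℝ) (k : ℤ) :
    antidiagCov (-α) (-β) k = antidiagCov α β k := by
  simp only [antidiagCov, Rcov_eq_autocorr, autocorr, maCoeff_neg_neg]
  refine tsum_congr fun p ↦ ?_
  have hsign : (-1 : ℝ) ^ (k + p.1 + (-k + p.2)) * (-1) ^ (p.1 + p.2) = 1 := by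
    rw [← zpow_add₀ (by norm_num)]
    exact Even.neg_one_zpow ⟨p.1 + p.2, by ring⟩
  linear_combination maCoeff α β ((k, -k) + p) * maCoeff α β p * hsign

theorem antidiagCov_nonneg (hαβ : 0 ≤ α * β) (k : ℤ) : 0 ≤ antidiagCov α β k := by
  have of_nonneg {x y : ℝ} (hx : 0 ≤ x) (hy : 0 ≤ y) : 0 ≤ antidiagCov x y k := by
    rw [antidiagCov, Rcov_eq_autocorr]
    exact tsum_nonneg fun p ↦
      mul_nonneg (maCoeff_nonneg hx hy _) (maCoeff_nonneg hx hy _)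
  rcases mul_nonneg_iff.mp hαβ with ⟨hα, hβ⟩ | ⟨hα, hβ⟩
  · exact of_nonneg hα hβ
  · rw [← antidiagCov_neg_coeffs]
    exact of_nonneg (neg_nonneg.mpr hα) (neg_nonneg.mpr hβ)

theorem Rcov_one_sub (h : |α| + |β| < 1) (k : ℤ) :
    Rcov α β (1 - k) k = α * antidiagCov α β k + β * antidiagCov α β (k - 1) := by
  rw [Rcov_recurrence_of_pos h (by omega), sub_sub_cancel_left, ← antidiagCov_neg α β k,
    ← antidiagCov_neg α β (k - 1)]
  simp only [antidiagCov, neg_neg, neg_sub]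

theorem antidiagCov_recurrence (h : |α| + |β| < 1) (k : ℤ) :
    (1 - (α + β) ^ 2) * antidiagCov α β k =
      α * β * (antidiagCov α β (k + 1) - 2 * antidiagCov α β k + antidiagCov α β (k - 1)) +
        if k = 0 then 1 else 0 := by
  have hnoise : maCoeff α β (-k, - -k) = if k = 0 then 1 else 0 := by
    split_ifs with hk
    · simp [hk, maCoeff]
    · exact maCoeff_of_neg α β (by dsimp only; omega)
  have hleft : Rcov α β (k - 1) (-k) = α * antidiagCov α β k + β * antidiagCov α β (k - 1) := by
    rw [← Rcov_one_sub h, ← Rcov_neg, neg_sub, neg_neg]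
  have hbelow : Rcov α β k (-k - 1) = α * antidiagCov α β (k + 1) + β * antidiagCov α β k := by
    have := Rcov_one_sub h (k + 1)
    rw [add_sub_cancel_right] at this
    rw [← this, ← Rcov_neg, show -(-k - 1) = k + 1 by ring, show -k = 1 - (k + 1) by ring]
  have hcentre := Rcov_recurrence h k (-k)
  rw [hnoise, hleft, hbelow, ← antidiagCov] at hcentre
  linear_combination hcentre

theorem one_sub_add_sq_mul_antidiagCov_nonneg (hαβ : 0 ≤ α * β) (h : |α| + |β| ≤ 1) (k : ℤ) :
    0 ≤ (1 - (α + β) ^ 2) * antidiagCov α β k :=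
  mul_nonneg (sub_nonneg.mpr (add_sq_le_one_of_abs_add_abs_le_one h)) (antidiagCov_nonneg hαβ k)

theorem antidiagCov_second_diff_nonneg (hαβ : 0 < α * β) (h : |α| + |β| < 1) {k : ℤ} (hk : k ≠ 0) :
    0 ≤ antidiagCov α β (k + 1) - 2 * antidiagCov α β k + antidiagCov α β (k - 1) := by
  have hrec := antidiagCov_recurrence h k
  rw [if_neg hk, add_zero] at hrec
  have hnonneg := one_sub_add_sq_mul_antidiagCov_nonneg hαβ.le h.le k
  exact nonneg_of_mul_nonneg_right (hrec ▸ hnonneg) hαβ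

theorem antidiagCov_zero_sub_one_le (hαβ : 0 < α * β) (h : |α| + |β| < 1) :
    antidiagCov α β 0 - antidiagCov α β 1 ≤ 1 / 2 / (α * β) := by
  have hrec := antidiagCov_recurrence h 0
  rw [if_pos rfl, zero_add, zero_sub, antidiagCov_neg] at hrec
  have hnonneg := one_sub_add_sq_mul_antidiagCov_nonneg hαβ.le h.le 0
  rw [le_div_iff₀ hαβ]
  linarith

theorem abs_antidiagCov_add_one_sub_le (hαβ : 0 < α * β) (h : |α| + |β| < 1) (k : ℤ) :
    |antidiagCov α β (k + 1) - antidiagCov α β k| ≤ 1 / 2 / (α * β) := by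
  have hmono : Monotone fun n : ℕ ↦ antidiagCov α β (n + 1 : ℕ) - antidiagCov α β n := by
    refine monotone_nat_of_le_succ fun n ↦ ?_
    have := antidiagCov_second_diff_nonneg hαβ h (k := n + 1) (by omega)
    rw [add_sub_cancel_right] at this
    push_cast
    linarith
  have hbdd : BddAbove (Set.range fun n : ℕ ↦ antidiagCov α β n) := by
    refine ⟨(∑' p, ‖maCoeff α β p‖) ^ 2, ?_⟩
    rintro _ ⟨n, rfl⟩
    exact (le_abs_self _).trans (abs_Rcov_le h _ _)
  have hnat (n : ℕ) : |antidiagCov α β (n + 1) - antidiagCov α β n| ≤ 1 / 2 / (α * β) := by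
    refine le_trans ?_ (antidiagCov_zero_sub_one_le hαβ h)
    exact_mod_cast abs_sub_le_of_monotone_sub_of_bddAbove hmono hbdd n
  cases k with
  | ofNat n => exact hnat n
  | negSucc n =>
    rw [Int.negSucc_eq, show -((n : ℤ) + 1) + 1 = -n by ring, antidiagCov_neg, antidiagCov_neg,
      abs_sub_comm]
    exact hnat n

end Antidiagonal

theorem abs_Rcov_sub_le_of_nonneg {α β : ℝ} (hαβ : 0 < α * β) (h : |α| + |β| < 1) {k ℓ : ℤ}
    (hkl : 0 ≤ k + ℓ) : |Rcov α β (k - 1) (ℓ + 1) - Rcov α β k ℓ| ≤ 1 / 2 / (α * β) := by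
  refine norm_le_of_recurrence_of_antidiagonal (α := α) (β := β)
    (u := fun k ℓ ↦ Rcov α β (k - 1) (ℓ + 1) - Rcov α β k ℓ) h.le
    (fun k ℓ hkl ↦ ?_) (fun k ↦ ?_) hkl
  · rw [Rcov_recurrence_of_pos h (k := k - 1) (ℓ := ℓ + 1) (by omega),
      Rcov_recurrence_of_pos h hkl, add_sub_cancel_right, sub_add_cancel, smul_eq_mul, smul_eq_mul]
    ring
  · have := abs_antidiagCov_add_one_sub_le hαβ h (k - 1)
    rwa [sub_add_cancel, abs_sub_comm, antidiagCov, antidiagCov, neg_sub', sub_neg_eq_add] at this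

theorem covariance_difference_uniform_bound_general {α β : ℝ} (hαβ : 0 < α * β)
    (h : |α| + |β| < 1) (k ℓ : ℤ) :
    |Rcov α β (k - 1) (ℓ + 1) - Rcov α β k ℓ| ≤ 1 / 2 / (α * β) := by
  rcases le_total 0 (k + ℓ) with hkl | hkl
  · exact abs_Rcov_sub_le_of_nonneg hαβ h hkl
  · have := abs_Rcov_sub_le_of_nonneg hαβ h (k := 1 - k) (ℓ := -ℓ - 1) (by omega)
    rwa [sub_add_cancel, show 1 - k - 1 = -k by ring, show 1 - k = -(k - 1) by ring,
      show -ℓ - 1 = -(ℓ + 1) by ring, Rcov_neg, Rcov_neg, abs_sub_comm] at this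

theorem covariance_difference_uniform_bound :
    ∃ K > (0 : ℝ), ∀ α β : ℝ, 0 < α * β → |α| + |β| < 1 → ∀ k ℓ : ℤ,
      |Rcov α β (k - 1) (ℓ + 1) - Rcov α β k ℓ| ≤ K / (α * β) ^ ((3 : ℝ) / 2) := by
  refine ⟨1 / 2, by norm_num, fun α β hαβ h k ℓ ↦
    (covariance_difference_uniform_bound_general hαβ h k ℓ).trans ?_⟩
  gcongr
  exact Real.rpow_le_self_of_le_one hαβ.le (mul_le_one_of_abs_add_abs_le_one h.le) (by norm_num)
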